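/- Let d ≥ 1, α ∈ (1,2), and θ > 1 − α/2. Let f : ℝ^d → ℝ be continuously differentiable with |∇f(x)| ≤ C₀ and |f(x)| ≤ C₀(1+|x|²)^{(1−θ)/2} + C₀ for all x ∈ ℝ^d and some constant C₀ > 0, and let μ be a probability measure on ℝ^d with ∫_{ℝ^d} (1+|x|²)^{1−θ} μ(dx) < ∞. Then the asymptotic variance V(f) := ∫_{ℝ^d} ∫_{ℝ^d∖{0}} [f(x+z) − f(x)]² C_{d,α} |z|^{−(α+d)} dz μ(dx) is finite. -/

import Mathlib

open MeasureTheory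

/-- The radial weight `r ^ (a - s)` on `(0, 1]` and `r ^ (b - s)` on `(1, ∞)`. -/
noncomputable def twoRegimePow (a b s r : ℝ) : ℝ :=
  if r ≤ 1 then r ^ (a - s) else r ^ (b - s)

theorem integrable_twoRegimePow_norm {d : ℕ} (hd : 1 ≤ d) {α a b : ℝ} (ha : α < a) (hb : b < α) :
    Integrable (fun z : EuclideanSpace ℝ (Fin d) => twoRegimePow a b (α + d) ‖z‖) := by
  have : Nonempty (Fin d) := ⟨⟨0, hd⟩⟩
  rw [integrable_fun_norm_addHaar volume (f := fun r => twoRegimePow a b (α + d) r)]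
  simp only [finrank_euclideanSpace, Fintype.card_fin, smul_eq_mul]
  have hpow : ∀ r : ℝ, 0 < r → ∀ c : ℝ, r ^ (d - 1) * r ^ (c - (α + d)) = r ^ (c - α - 1) := by
    intro r hr c
    rw [← Real.rpow_natCast, ← Real.rpow_add hr, Nat.cast_sub hd]
    congr 1
    push_cast
    ring
  rw [← Set.Ioc_union_Ioi_eq_Ioi (zero_le_one' ℝ)]
  refine IntegrableOn.union ?_ ?_
  · have h : IntegrableOn (fun r : ℝ => r ^ (a - α - 1)) (Set.Ioc 0 1) :=
      (intervalIntegrable_iff_integrableOn_Ioc_of_le zero_le_one).1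
        (intervalIntegral.intervalIntegrable_rpow' (by linarith))
    refine h.congr_fun (fun r hr => ?_) measurableSet_Ioc
    simp only [twoRegimePow, if_pos hr.2, hpow r hr.1]
  · have h : IntegrableOn (fun r : ℝ => r ^ (b - α - 1)) (Set.Ioi 1) :=
      integrableOn_Ioi_rpow_of_lt (by linarith) one_pos
    refine h.congr_fun (fun r hr => ?_) measurableSet_Ioi
    have hr1 : (1 : ℝ) < r := hr
    simp only [twoRegimePow, if_neg hr1.not_ge, hpow r (one_pos.trans hr1)]

theorem abs_sub_le_of_norm_gradient_le {E : Type*} [NormedAddCommGroup E] [InnerProductSpace ℝ E]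
    [CompleteSpace E] {f : E → ℝ} {C : ℝ} (hf : Differentiable ℝ f)
    (hC : ∀ x, ‖gradient f x‖ ≤ C) (x z : E) : |f (x + z) - f x| ≤ C * ‖z‖ := by
  have h := Convex.norm_image_sub_le_of_norm_fderiv_le (𝕜 := ℝ) (f := f) (s := Set.univ) (C := C)
    (x := x) (y := x + z) (fun y _ => hf y)
    (fun y _ => by simpa [gradient] using hC y) convex_univ (Set.mem_univ _) (Set.mem_univ _)
  simpa using h

theorem one_add_norm_add_sq_le {E : Type*} [SeminormedAddCommGroup E] (x z : E) :
    1 + ‖x + z‖ ^ 2 ≤ 2 * (1 + ‖x‖ ^ 2) * (1 + ‖z‖ ^ 2) := by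
  have h1 := norm_add_le x z
  have h2 : ‖x + z‖ ^ 2 ≤ (‖x‖ + ‖z‖) ^ 2 := by gcongr
  nlinarith [sq_nonneg (‖x‖ - ‖z‖), mul_nonneg (sq_nonneg ‖x‖) (sq_nonneg ‖z‖)]

theorem sq_sub_le_of_sq_le_rpow {E : Type*} [SeminormedAddCommGroup E] {f : E → ℝ} {C q : ℝ}
    (hq0 : 0 ≤ q) (hq1 : q ≤ 1) (hf : ∀ x, f x ^ 2 ≤ C * (1 + ‖x‖ ^ 2) ^ q) (hC : 0 ≤ C) (x z : E)
    (hz : 1 ≤ ‖z‖) :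
    (f (x + z) - f x) ^ 2 ≤ 10 * C * (1 + ‖x‖ ^ 2) ^ q * ‖z‖ ^ (2 * q) := by
  have hz0 : 0 ≤ ‖z‖ := norm_nonneg z
  have hX : 0 ≤ (1 + ‖x‖ ^ 2) ^ q := by positivity
  have h1 : (1 : ℝ) ≤ ‖z‖ ^ (2 * q) := Real.one_le_rpow hz (by positivity)
  have h4 : (4 : ℝ) ^ q ≤ 4 := by
    simpa using Real.rpow_le_rpow_of_exponent_le (by norm_num : (1 : ℝ) ≤ 4) hq1
  have hsum : (1 + ‖x + z‖ ^ 2) ^ q ≤ 4 * ((1 + ‖x‖ ^ 2) ^ q * ‖z‖ ^ (2 * q)) := by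
    calc (1 + ‖x + z‖ ^ 2) ^ q ≤ (4 * ((1 + ‖x‖ ^ 2) * ‖z‖ ^ 2)) ^ q := by
          refine Real.rpow_le_rpow (by positivity) ((one_add_norm_add_sq_le x z).trans ?_) hq0
          nlinarith [mul_nonneg (add_nonneg zero_le_one (sq_nonneg ‖x‖))
            (by nlinarith : 0 ≤ ‖z‖ ^ 2 - 1)]
      _ = 4 ^ q * ((1 + ‖x‖ ^ 2) ^ q * ‖z‖ ^ (2 * q)) := by
          rw [Real.mul_rpow (by norm_num) (by positivity),
            Real.mul_rpow (by positivity) (by positivity), Real.rpow_mul hz0, Real.rpow_two]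
      _ ≤ _ := by gcongr
  have hx : (1 + ‖x‖ ^ 2) ^ q ≤ (1 + ‖x‖ ^ 2) ^ q * ‖z‖ ^ (2 * q) := le_mul_of_one_le_right hX h1
  have e1 := (hf (x + z)).trans (mul_le_mul_of_nonneg_left hsum hC)
  have e2 := (hf x).trans (mul_le_mul_of_nonneg_left hx hC)
  nlinarith [sq_nonneg (f (x + z) + f x)]

theorem sq_le_of_abs_le_rpow {E : Type*} [SeminormedAddCommGroup E] {f : E → ℝ} {C p : ℝ}
    (hC : 0 ≤ C) (hf : ∀ x, |f x| ≤ C * (1 + ‖x‖ ^ 2) ^ (p / 2) + C) (x : E) :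
    f x ^ 2 ≤ 4 * C ^ 2 * (1 + ‖x‖ ^ 2) ^ max p 0 := by
  have hb : (1 : ℝ) ≤ 1 + ‖x‖ ^ 2 := le_add_of_nonneg_right (sq_nonneg _)
  have h1 : (1 : ℝ) ≤ (1 + ‖x‖ ^ 2) ^ (max p 0 / 2) := Real.one_le_rpow hb (by positivity)
  have h2 : (1 + ‖x‖ ^ 2) ^ (p / 2) ≤ (1 + ‖x‖ ^ 2) ^ (max p 0 / 2) :=
    Real.rpow_le_rpow_of_exponent_le hb (by gcongr; exact le_max_left _ _)
  have h3 : |f x| ≤ 2 * C * (1 + ‖x‖ ^ 2) ^ (max p 0 / 2) := by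
    nlinarith [hf x, mul_le_mul_of_nonneg_left h1 hC, mul_le_mul_of_nonneg_left h2 hC]
  calc f x ^ 2 = |f x| ^ 2 := (sq_abs _).symm
    _ ≤ (2 * C * (1 + ‖x‖ ^ 2) ^ (max p 0 / 2)) ^ 2 := by gcongr
    _ = 4 * C ^ 2 * (1 + ‖x‖ ^ 2) ^ max p 0 := by
      rw [mul_pow, ← Real.rpow_natCast (_ ^ _), ← Real.rpow_mul (by positivity)]
      push_cast
      ring_nf

theorem sq_sub_mul_rpow_le {E : Type*} [NormedAddCommGroup E] {f : E → ℝ} {C q s : ℝ}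
    (hq0 : 0 ≤ q) (hq1 : q ≤ 1)
    (hlip : ∀ x z, |f (x + z) - f x| ≤ C * ‖z‖)
    (hf : ∀ x, f x ^ 2 ≤ 4 * C ^ 2 * (1 + ‖x‖ ^ 2) ^ q) (x : E) {z : E} (hz : z ≠ 0) :
    (f (x + z) - f x) ^ 2 * ‖z‖ ^ (-s) ≤
      40 * C ^ 2 * (1 + ‖x‖ ^ 2) ^ q * twoRegimePow 2 (2 * q) s ‖z‖ := by
  have hz0 : 0 < ‖z‖ := norm_pos_iff.2 hz
  have hX : (1 : ℝ) ≤ (1 + ‖x‖ ^ 2) ^ q :=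
    Real.one_le_rpow (le_add_of_nonneg_right (sq_nonneg _)) hq0
  unfold twoRegimePow
  split_ifs with h
  · rw [sub_eq_add_neg 2 s, Real.rpow_add hz0, ← mul_assoc, Real.rpow_two]
    gcongr
    calc (f (x + z) - f x) ^ 2 = |f (x + z) - f x| ^ 2 := (sq_abs _).symm
      _ ≤ (C * ‖z‖) ^ 2 := by gcongr; exact hlip x z
      _ = C ^ 2 * ‖z‖ ^ 2 := mul_pow _ _ _
      _ ≤ _ := by
        gcongr
        nlinarith [sq_nonneg C]
  · rw [sub_eq_add_neg (2 * q), Real.rpow_add hz0, ← mul_assoc]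
    gcongr
    have := sq_sub_le_of_sq_le_rpow hq0 hq1 hf (by positivity) x z (not_le.1 h).le
    linarith

theorem integrable_one_add_norm_sq_rpow_max {E : Type*} [NormedAddCommGroup E] [MeasurableSpace E]
    [BorelSpace E] {μ : Measure E} [IsFiniteMeasure μ] {p : ℝ}
    (h : Integrable (fun x : E => (1 + ‖x‖ ^ 2) ^ p) μ) :
    Integrable (fun x : E => (1 + ‖x‖ ^ 2) ^ max p 0) μ := by
  rcases le_total p 0 with hp | hp
  · simp [max_eq_right hp]
  · simpa [max_eq_left hp] using h

/-- Finiteness of the asymptotic variance in the superlinear regime: for `α ∈ (1,2)`,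
`θ > 1 - α/2`, `f ∈ C¹(ℝ^d)` with `|∇f(x)| ≤ C₀` and `|f(x)| ≤ C₀(1+|x|²)^{(1-θ)/2} + C₀`,
and `μ` a probability measure on `ℝ^d` with `∫ (1+|x|²)^{1-θ} μ(dx) < ∞`, the asymptotic
variance `V(f) = ∫∫ [f(x+z)-f(x)]² C_{d,α} |z|^{-(α+d)} dz μ(dx)` is finite. -/
theorem stmt15 (d : ℕ) (hd : 1 ≤ d) (α θ C₀ : ℝ) (hα1 : 1 < α) (hα2 : α < 2)
    (hθ : 1 - α / 2 < θ) (hC₀ : 0 < C₀)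
    (f : EuclideanSpace ℝ (Fin d) → ℝ) (hf : ContDiff ℝ 1 f)
    (hgb : ∀ x, ‖gradient f x‖ ≤ C₀)
    (hfb : ∀ x, |f x| ≤ C₀ * (1 + ‖x‖ ^ 2) ^ ((1 - θ) / 2) + C₀)
    (μ : Measure (EuclideanSpace ℝ (Fin d))) (hμ : IsProbabilityMeasure μ)
    (hmom : Integrable (fun x : EuclideanSpace ℝ (Fin d) => (1 + ‖x‖ ^ 2) ^ (1 - θ)) μ) :
    (∀ x : EuclideanSpace ℝ (Fin d),
      IntegrableOn
        (fun z : EuclideanSpace ℝ (Fin d) => (f (x + z) - f x) ^ 2 *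
          ((α * (2 : ℝ) ^ (α - 1) * Real.pi ^ (-(d : ℝ) / 2) *
            Real.Gamma ((d + α) / 2) / Real.Gamma (1 - α / 2)) * ‖z‖ ^ (-(α + d))))
        {z : EuclideanSpace ℝ (Fin d) | z ≠ 0}) ∧
    Integrable (fun x : EuclideanSpace ℝ (Fin d) =>
      ∫ z in {z : EuclideanSpace ℝ (Fin d) | z ≠ 0},
        (f (x + z) - f x) ^ 2 *
          ((α * (2 : ℝ) ^ (α - 1) * Real.pi ^ (-(d : ℝ) / 2) *
            Real.Gamma ((d + α) / 2) / Real.Gamma (1 - α / 2)) * ‖z‖ ^ (-(α + d)))) μ := by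
  generalize α * (2 : ℝ) ^ (α - 1) * Real.pi ^ (-(d : ℝ) / 2) *
    Real.Gamma ((d + α) / 2) / Real.Gamma (1 - α / 2) = c
  set q := max (1 - θ) 0
  have hqα : 2 * q < α := by
    have : q < α / 2 := max_lt (by linarith) (by linarith)
    linarith
  have hmeas : Measurable fun p : EuclideanSpace ℝ (Fin d) × EuclideanSpace ℝ (Fin d) =>
      (f (p.1 + p.2) - f p.1) ^ 2 * (c * ‖p.2‖ ^ (-(α + d))) := by
    have := hf.continuous.measurable
    fun_prop
  have hset : MeasurableSet {z : EuclideanSpace ℝ (Fin d) | z ≠ 0} :=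
    (measurableSet_singleton 0).compl
  have hw := (integrable_twoRegimePow_norm hd hα2 hqα).integrableOn
    (s := {z : EuclideanSpace ℝ (Fin d) | z ≠ 0})
  have hbound : ∀ x, ∀ᵐ z ∂volume.restrict {z : EuclideanSpace ℝ (Fin d) | z ≠ 0},
      ‖(f (x + z) - f x) ^ 2 * (c * ‖z‖ ^ (-(α + d)))‖ ≤
        |c| * (40 * C₀ ^ 2 * (1 + ‖x‖ ^ 2) ^ q) * twoRegimePow 2 (2 * q) (α + d) ‖z‖ := by
    intro x
    filter_upwards [ae_restrict_mem hset] with z hz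
    have h := sq_sub_mul_rpow_le (s := α + d) (le_max_right _ _) (by linarith : q ≤ 1)
      (abs_sub_le_of_norm_gradient_le (hf.differentiable one_ne_zero) hgb)
      (sq_le_of_abs_le_rpow hC₀.le hfb) x hz
    have hnorm : ‖(f (x + z) - f x) ^ 2 * (c * ‖z‖ ^ (-(α + d)))‖ =
        |c| * ((f (x + z) - f x) ^ 2 * ‖z‖ ^ (-(α + d))) := by
      rw [Real.norm_eq_abs, abs_mul, abs_mul, abs_of_nonneg (sq_nonneg (_ - _)),
        abs_of_nonneg (Real.rpow_nonneg (norm_nonneg z) _)]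
      ring
    rw [hnorm, mul_assoc |c|]
    gcongr
  refine ⟨fun x => (hw.const_mul _).mono'
    (hmeas.comp measurable_prodMk_left).aestronglyMeasurable (hbound x), ?_⟩
  refine (((integrable_one_add_norm_sq_rpow_max hmom).const_mul (|c| * (40 * C₀ ^ 2))).mul_const
    (∫ z in {z : EuclideanSpace ℝ (Fin d) | z ≠ 0}, twoRegimePow 2 (2 * q) (α + d) ‖z‖)).mono'
    hmeas.stronglyMeasurable.integral_prod_right'.aestronglyMeasurable (.of_forall fun x => ?_)
  refine (norm_integral_le_of_norm_le (hw.const_mul _) (hbound x)).trans_eq ?_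
  rw [integral_const_mul]
  ring
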